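/- Under the decoy-state assumptions, the single-photon gain of the signal states satisfies Q₁ := μ·e^{-μ}·Y(1) ≥ μ·e^{-μ}·Y₁^L, where Y₁^L = μ/(μ(ν₁ − ν₂) − (ν₁² − ν₂²)) · [ Q(ν₁)·e^{ν₁} − Q(ν₂)·e^{ν₂} − ((ν₁² − ν₂²)/μ²)·(Q(μ)·e^{μ} − Y₀^L) ] and Y₀^L = max{ (ν₁·Q(ν₂)·e^{ν₂} − ν₂·Q(ν₁)·e^{ν₁}) / (ν₁ − ν₂), 0 }. -/

import Mathlib

/-- The gain for intensity `m` with yields `Y`: Poisson average of the yields. -/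
noncomputable def decoyGain (Y : ℕ → ℝ) (m : ℝ) : ℝ :=
  ∑' i : ℕ, Real.exp (-m) * m ^ i / (Nat.factorial i) * Y i

/-!
Multiplying a gain by `exp m` turns it into the power series `∑ mⁱ / i! * Y i`. Write it as
`Y 0 + m * Y 1 + T m`, where `T m` collects the terms with `i ≥ 2`. Termwise comparison of powers
gives `ν₁ * T ν₂ ≤ ν₂ * T ν₁`, so that eliminating `Y 1` from the two decoy gains bounds `Y 0`
below, and `μ² * (T ν₁ - T ν₂) ≤ (ν₁² - ν₂²) * T μ`, so that the signal gain controls the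
multi-photon part of the difference of the decoy gains. What is left of that difference is `Y 1`
times a positive coefficient.
-/

lemma pow_add_two_sub_pow_add_two_le {R : Type*} [CommRing R] [PartialOrder R]
    [IsOrderedRing R] {a b c : R} (hb : 0 ≤ b) (hba : b ≤ a) (hc : a + b ≤ c) (n : ℕ) :
    a ^ (n + 2) - b ^ (n + 2) ≤ (a ^ 2 - b ^ 2) * c ^ n := by
  have ha : 0 ≤ a := hb.trans hba
  induction n with
  | zero => simp
  | succ n ih =>
    have cross_nonneg : 0 ≤ a * b * (a ^ (n + 1) - b ^ (n + 1)) :=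
      mul_nonneg (mul_nonneg ha hb) (sub_nonneg.2 (pow_le_pow_left₀ hb hba _))
    have diff_nonneg : 0 ≤ a ^ (n + 2) - b ^ (n + 2) :=
      sub_nonneg.2 (pow_le_pow_left₀ hb hba _)
    calc a ^ (n + 1 + 2) - b ^ (n + 1 + 2)
        = (a + b) * (a ^ (n + 2) - b ^ (n + 2)) - a * b * (a ^ (n + 1) - b ^ (n + 1)) := by ring
      _ ≤ (a + b) * (a ^ (n + 2) - b ^ (n + 2)) := sub_le_self _ cross_nonneg
      _ ≤ c * ((a ^ 2 - b ^ 2) * c ^ n) :=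
          mul_le_mul hc ih diff_nonneg ((add_nonneg ha hb).trans hc)
      _ = (a ^ 2 - b ^ 2) * c ^ (n + 1) := by ring

lemma summable_pow_div_factorial_mul_of_abs_le {Y : ℕ → ℝ} {C : ℝ} (hY : ∀ i, |Y i| ≤ C) (m : ℝ) :
    Summable fun i : ℕ => m ^ i / i.factorial * Y i := by
  refine .of_norm_bounded ((Real.summable_pow_div_factorial m).norm.mul_right C) fun i => ?_
  rw [norm_mul, Real.norm_eq_abs (Y i)]
  gcongr
  exact hY i

lemma summable_pow_div_factorial_mul_of_le {Y : ℕ → ℝ} (hY : ∀ i, 0 ≤ Y i) {a c : ℝ}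
    (hc : Summable fun i : ℕ => c ^ i / i.factorial * Y i) (ha : 0 ≤ a) (hac : a ≤ c) :
    Summable fun i : ℕ => a ^ i / i.factorial * Y i := by
  refine .of_nonneg_of_le (fun i => mul_nonneg (by positivity) (hY i)) (fun i => ?_) hc
  have yield_nonneg := hY i
  gcongr

/-- The part of the power series `decoyGain Y m * exp m = ∑ mⁱ / i! * Y i` that comes from pulses
with at least two photons. The index is shifted: the `i`-th summand belongs to `i + 2` photons. -/
noncomputable def multiPhotonPart (Y : ℕ → ℝ) (m : ℝ) : ℝ :=
  ∑' i : ℕ, m ^ (i + 2) / (i + 2).factorial * Y (i + 2)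

lemma decoyGain_mul_exp (Y : ℕ → ℝ) (m : ℝ) :
    decoyGain Y m * Real.exp m = ∑' i : ℕ, m ^ i / i.factorial * Y i := by
  have exp_neg_mul_exp : Real.exp (-m) * Real.exp m = 1 := by
    rw [← Real.exp_add, neg_add_cancel, Real.exp_zero]
  rw [decoyGain, ← tsum_mul_right]
  refine tsum_congr fun i => ?_
  linear_combination (m ^ i / i.factorial * Y i) * exp_neg_mul_exp

lemma decoyGain_mul_exp_eq_add_multiPhotonPart {Y : ℕ → ℝ} {m : ℝ}
    (hm : Summable fun i : ℕ => m ^ i / i.factorial * Y i) :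
    decoyGain Y m * Real.exp m = Y 0 + m * Y 1 + multiPhotonPart Y m := by
  rw [decoyGain_mul_exp, ← hm.sum_add_tsum_nat_add 2, multiPhotonPart]
  simp [Finset.sum_range_succ]

section NonnegYields

variable {Y : ℕ → ℝ} {μ ν₁ ν₂ : ℝ}

lemma mul_multiPhotonPart_le (hY : ∀ i, 0 ≤ Y i) (hν₂ : 0 ≤ ν₂) (hν : ν₂ ≤ ν₁)
    (hsum : Summable fun i : ℕ => ν₁ ^ i / i.factorial * Y i) :
    ν₁ * multiPhotonPart Y ν₂ ≤ ν₂ * multiPhotonPart Y ν₁ := by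
  have hν₁ : 0 ≤ ν₁ := hν₂.trans hν
  have tail₁ := (summable_nat_add_iff 2).2 hsum
  have tail₂ := (summable_nat_add_iff 2).2
    (summable_pow_div_factorial_mul_of_le hY hsum hν₂ hν)
  rw [multiPhotonPart, multiPhotonPart, ← tsum_mul_left, ← tsum_mul_left]
  refine (tail₂.mul_left ν₁).tsum_le_tsum (fun i => ?_) (tail₁.mul_left ν₂)
  have yield_nonneg := hY (i + 2)
  calc ν₁ * (ν₂ ^ (i + 2) / (i + 2).factorial * Y (i + 2))
      = ν₁ * ν₂ * ν₂ ^ (i + 1) * (Y (i + 2) / (i + 2).factorial) := by ring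
    _ ≤ ν₁ * ν₂ * ν₁ ^ (i + 1) * (Y (i + 2) / (i + 2).factorial) := by gcongr
    _ = ν₂ * (ν₁ ^ (i + 2) / (i + 2).factorial * Y (i + 2)) := by ring

lemma sq_mul_multiPhotonPart_sub_le (hY : ∀ i, 0 ≤ Y i) (hν₂ : 0 ≤ ν₂) (hν : ν₂ ≤ ν₁)
    (hμ : ν₁ + ν₂ ≤ μ) (hsum : Summable fun i : ℕ => μ ^ i / i.factorial * Y i) :
    μ ^ 2 * (multiPhotonPart Y ν₁ - multiPhotonPart Y ν₂)
      ≤ (ν₁ ^ 2 - ν₂ ^ 2) * multiPhotonPart Y μ := by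
  have tail {m : ℝ} (hm : 0 ≤ m) (hmμ : m ≤ μ) :=
    (summable_nat_add_iff 2).2 (summable_pow_div_factorial_mul_of_le hY hsum hm hmμ)
  have tail₁ := tail (hν₂.trans hν) (by linarith)
  have tail₂ := tail hν₂ (by linarith)
  have tailμ := (summable_nat_add_iff 2).2 hsum
  simp only [multiPhotonPart]
  rw [← tail₁.tsum_sub tail₂, ← tsum_mul_left, ← tsum_mul_left]
  refine ((tail₁.sub tail₂).mul_left _).tsum_le_tsum (fun i => ?_) (tailμ.mul_left _)
  have yield_nonneg := hY (i + 2)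
  calc μ ^ 2 * (ν₁ ^ (i + 2) / (i + 2).factorial * Y (i + 2)
          - ν₂ ^ (i + 2) / (i + 2).factorial * Y (i + 2))
      = μ ^ 2 * (ν₁ ^ (i + 2) - ν₂ ^ (i + 2)) * (Y (i + 2) / (i + 2).factorial) := by ring
    _ ≤ μ ^ 2 * ((ν₁ ^ 2 - ν₂ ^ 2) * μ ^ i) * (Y (i + 2) / (i + 2).factorial) := by
        gcongr μ ^ 2 * ?_ * _
        exact pow_add_two_sub_pow_add_two_le hν₂ hν hμ i
    _ = (ν₁ ^ 2 - ν₂ ^ 2) * (μ ^ (i + 2) / (i + 2).factorial * Y (i + 2)) := by ring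

lemma vacuum_yield_lower_bound (hY : ∀ i, 0 ≤ Y i) (hν₂ : 0 ≤ ν₂) (hν : ν₂ < ν₁)
    (hsum : Summable fun i : ℕ => ν₁ ^ i / i.factorial * Y i) :
    (ν₁ * decoyGain Y ν₂ * Real.exp ν₂ - ν₂ * decoyGain Y ν₁ * Real.exp ν₁) / (ν₁ - ν₂)
      ≤ Y 0 := by
  have hsum₂ := summable_pow_div_factorial_mul_of_le hY hsum hν₂ hν.le
  rw [div_le_iff₀ (sub_pos.2 hν), mul_assoc ν₁, mul_assoc ν₂,
    decoyGain_mul_exp_eq_add_multiPhotonPart hsum, decoyGain_mul_exp_eq_add_multiPhotonPart hsum₂]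
  linarith [mul_multiPhotonPart_le hY hν₂ hν.le hsum]

lemma single_photon_yield_lower_bound (hY : ∀ i, 0 ≤ Y i) (hν₂ : 0 ≤ ν₂) (hν : ν₂ < ν₁)
    (hμ : ν₁ + ν₂ < μ) (hsum : Summable fun i : ℕ => μ ^ i / i.factorial * Y i)
    {L : ℝ} (hL : L ≤ Y 0) :
    μ / (μ * (ν₁ - ν₂) - (ν₁ ^ 2 - ν₂ ^ 2)) *
      (decoyGain Y ν₁ * Real.exp ν₁ - decoyGain Y ν₂ * Real.exp ν₂
        - (ν₁ ^ 2 - ν₂ ^ 2) / μ ^ 2 * (decoyGain Y μ * Real.exp μ - L)) ≤ Y 1 := by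
  have μ_pos : 0 < μ := by linarith
  have sq_sub_nonneg : 0 ≤ ν₁ ^ 2 - ν₂ ^ 2 := sub_nonneg.2 (pow_le_pow_left₀ hν₂ hν.le 2)
  have denom_pos : 0 < μ * (ν₁ - ν₂) - (ν₁ ^ 2 - ν₂ ^ 2) := by
    linarith [mul_pos (sub_pos.2 hν) (sub_pos.2 hμ)]
  have expand {m : ℝ} (hm : 0 ≤ m) (hmμ : m ≤ μ) :=
    decoyGain_mul_exp_eq_add_multiPhotonPart
      (summable_pow_div_factorial_mul_of_le hY hsum hm hmμ)
  have decoy_difference :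
      μ ^ 2 * (decoyGain Y ν₁ * Real.exp ν₁ - decoyGain Y ν₂ * Real.exp ν₂)
        - (ν₁ ^ 2 - ν₂ ^ 2) * (decoyGain Y μ * Real.exp μ - L)
      ≤ μ * (Y 1 * (μ * (ν₁ - ν₂) - (ν₁ ^ 2 - ν₂ ^ 2))) := by
    rw [expand (hν₂.trans hν.le) (by linarith), expand hν₂ (by linarith), expand μ_pos.le le_rfl]
    linarith [sq_mul_multiPhotonPart_sub_le hY hν₂ hν.le hμ.le hsum,
      mul_le_mul_of_nonneg_left hL sq_sub_nonneg]
  rw [div_mul_eq_mul_div, div_le_iff₀ denom_pos]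
  refine le_of_mul_le_mul_left (le_of_eq_of_le ?_ decoy_difference) μ_pos
  field_simp

end NonnegYields

theorem single_photon_gain_lower_bound_general {Y : ℕ → ℝ} (hY : ∀ i, 0 ≤ Y i) {μ ν₁ ν₂ : ℝ}
    (hν₂ : 0 ≤ ν₂) (hν : ν₂ < ν₁) (hμ : ν₁ + ν₂ < μ)
    (hsum : Summable fun i : ℕ => μ ^ i / i.factorial * Y i) :
    μ * Real.exp (-μ) * Y 1 ≥
      μ * Real.exp (-μ) *
        (μ / (μ * (ν₁ - ν₂) - (ν₁ ^ 2 - ν₂ ^ 2)) *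
          (decoyGain Y ν₁ * Real.exp ν₁ - decoyGain Y ν₂ * Real.exp ν₂
            - (ν₁ ^ 2 - ν₂ ^ 2) / μ ^ 2 *
              (decoyGain Y μ * Real.exp μ
                - max ((ν₁ * decoyGain Y ν₂ * Real.exp ν₂ - ν₂ * decoyGain Y ν₁ * Real.exp ν₁)
                        / (ν₁ - ν₂)) 0))) := by
  have hν₁ : 0 ≤ ν₁ := hν₂.trans hν.le
  have μ_nonneg : 0 ≤ μ := by linarith
  have hsum₁ := summable_pow_div_factorial_mul_of_le hY hsum hν₁ (by linarith)
  have vacuum := max_le (vacuum_yield_lower_bound hY hν₂ hν hsum₁) (hY 0)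
  exact mul_le_mul_of_nonneg_left
    (single_photon_yield_lower_bound hY hν₂ hν hμ hsum vacuum) (by positivity)

theorem single_photon_gain_lower_bound (Y : ℕ → ℝ) (hY : ∀ i, 0 ≤ Y i ∧ Y i ≤ 1)
    (μ ν₁ ν₂ : ℝ) (hν₂ : 0 ≤ ν₂) (hν : ν₂ < ν₁) (hμ : ν₁ + ν₂ < μ) :
    μ * Real.exp (-μ) * Y 1 ≥
      μ * Real.exp (-μ) *
        (μ / (μ * (ν₁ - ν₂) - (ν₁ ^ 2 - ν₂ ^ 2)) *
          (decoyGain Y ν₁ * Real.exp ν₁ - decoyGain Y ν₂ * Real.exp ν₂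
            - (ν₁ ^ 2 - ν₂ ^ 2) / μ ^ 2 *
              (decoyGain Y μ * Real.exp μ
                - max ((ν₁ * decoyGain Y ν₂ * Real.exp ν₂ - ν₂ * decoyGain Y ν₁ * Real.exp ν₁)
                        / (ν₁ - ν₂)) 0))) :=
  single_photon_gain_lower_bound_general (fun i => (hY i).1) hν₂ hν hμ
    (summable_pow_div_factorial_mul_of_abs_le
      (fun i => (abs_of_nonneg (hY i).1).trans_le (hY i).2) μ)
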